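/- Let y, b be positive integers with gcd(b,y) = 1, q a positive integer, and a an integer with gcd(a,q) = 1; set g = gcd(y,q) and ℓ = lcm(y,q). Then: (i) Υ(a,q) = 0 if 1 < g < q and gcd(g, q/g) > 1; (ii) Υ(a,q) = (φ(y)/φ(ℓ)) · μ(q/g) · e(−abt/g) if 1 ≤ g < q and gcd(g, q/g) = 1, where ḡ is a multiplicative inverse of g modulo q/g and t is the integer with 1 − gḡ = (q/g)t; (iii) Υ(a,q) = e(−ba/q) if g = q. -/

import Mathlib

noncomputable section

/-- `e(t) = e^{2πit}`. -/
def e2pi (t : ℝ) : ℂ := Complex.exp (2 * Real.pi * Complex.I * t)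

/-- The Gauss-type sum `Υ(a,q) = (φ(y)/φ(ℓ)) Σ_{1 ≤ r ≤ q, gcd(r,q)=1, r ≡ b (mod g)} e(-ra/q)`,
where `g = gcd(y,q)` and `ℓ = lcm(y,q)`. -/
def Ups (y : ℕ) (b : ℤ) (a : ℤ) (q : ℕ) : ℂ :=
  ((Nat.totient y : ℂ) / (Nat.totient (Nat.lcm y q) : ℂ)) *
    ∑ r ∈ (Finset.Icc 1 q).filter
        (fun r : ℕ => Nat.gcd r q = 1 ∧
          (r : ℤ) % (Nat.gcd y q : ℤ) = b % (Nat.gcd y q : ℤ)),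
      e2pi (-((((r : ℤ) * a : ℤ) : ℝ) / (q : ℝ)))

theorem e2pi_add (s t : ℝ) : e2pi (s + t) = e2pi s * e2pi t := by
  simp only [e2pi, ← Complex.exp_add]
  push_cast
  ring_nf

theorem e2pi_intCast (n : ℤ) : e2pi n = 1 := by
  rw [e2pi, Complex.exp_eq_one_iff]
  exact ⟨n, by push_cast; ring⟩

theorem e2pi_nat_mul (n : ℕ) (t : ℝ) : e2pi (n * t) = e2pi t ^ n := by
  simp only [e2pi, ← Complex.exp_nat_mul]
  push_cast
  ring_nf

theorem isPrimitiveRoot_e2pi {c : ℤ} {m : ℕ} (hm : m ≠ 0) (h : IsCoprime c m) :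
    IsPrimitiveRoot (e2pi (c / m)) m := by
  simpa [e2pi] using Complex.isPrimitiveRoot_exp_of_isCoprime c m hm h

theorem sum_nthRootsFinset_one {n : ℕ} (hn : 0 < n) :
    ∑ z ∈ Polynomial.nthRootsFinset n (1 : ℂ), z = if n = 1 then 1 else 0 := by
  classical
  have hz := Complex.isPrimitiveRoot_exp n hn.ne'
  have h : ∑ z ∈ Polynomial.nthRootsFinset n (1 : ℂ), z
      = (Polynomial.nthRoots n (1 : ℂ)).sum := by
    rw [Polynomial.nthRootsFinset, ← Multiset.toFinset_eq hz.nthRoots_one_nodup]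
    simp [Finset.sum]
  rw [h, hz.nthRoots_eq (one_pow n)]
  change ∑ i ∈ Finset.range n, _ * (1 : ℂ) = _
  simp only [mul_one]
  split_ifs with h1
  · subst h1
    simp
  · exact hz.geom_sum_eq_zero (by omega)

/-- The sum of the primitive `n`-th roots of unity is `μ(n)`. -/
theorem sum_primitiveRoots_eq_moebius {n : ℕ} (hn : 0 < n) :
    ∑ z ∈ primitiveRoots n ℂ, z = ((ArithmeticFunction.moebius n : ℤ) : ℂ) := by
  classical
  have key := (ArithmeticFunction.sum_eq_iff_sum_mul_moebius_eq
    (f := fun n => ∑ z ∈ primitiveRoots n ℂ, z)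
    (g := fun n => if n = 1 then (1 : ℂ) else 0)).1 (fun n hn => by
      rw [← sum_nthRootsFinset_one hn, IsPrimitiveRoot.nthRoots_one_eq_biUnion_primitiveRoots,
        Finset.sum_biUnion]
      exact fun i _ j _ hij => IsPrimitiveRoot.disjoint hij) n hn
  rw [← key, Finset.sum_eq_single (n, 1)]
  · simp
  · rintro ⟨i, j⟩ hij hne
    have hj : j ≠ 1 := by
      rintro rfl
      have := (Nat.mem_divisorsAntidiagonal.1 hij).1
      simp_all
    simp [hj]
  · intro h
    simp [hn.ne'] at h

/-- A sum over a period that is multiplied by `w ≠ 1` under a shift vanishes. -/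
theorem sum_filter_Icc_eq_zero_of_shift {q h : ℕ} (hh : h ≤ q) (P : ℕ → Prop) [DecidablePred P]
    (f : ℕ → ℂ) {w : ℂ} (hw : w ≠ 1) (hP : ∀ r, P (r + h) ↔ P r) (hPq : ∀ r, P (r + q) ↔ P r)
    (hf : ∀ r, f (r + h) = w * f r) (hfq : ∀ r, f (r + q) = f r) :
    ∑ r ∈ (Finset.Icc 1 q).filter P, f r = 0 := by
  have key : ∑ r ∈ (Finset.Icc 1 q).filter P, w * f r = ∑ r ∈ (Finset.Icc 1 q).filter P, f r := by
    refine Finset.sum_nbij' (fun r => if r + h ≤ q then r + h else r + h - q)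
      (fun r => if h < r then r - h else r + q - h) ?_ ?_ ?_ ?_ ?_
    · intro r hr
      simp only [Finset.mem_filter, Finset.mem_Icc] at hr ⊢
      split_ifs with h1
      · exact ⟨by omega, (hP r).2 hr.2⟩
      · refine ⟨by omega, (hPq _).1 ?_⟩
        rw [Nat.sub_add_cancel (by omega)]
        exact (hP r).2 hr.2
    · intro r hr
      simp only [Finset.mem_filter, Finset.mem_Icc] at hr ⊢
      split_ifs with h1
      · refine ⟨by omega, (hP _).1 ?_⟩
        rw [Nat.sub_add_cancel (by omega)]
        exact hr.2
      · refine ⟨by omega, (hP _).1 ?_⟩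
        rw [Nat.sub_add_cancel (by omega)]
        exact (hPq r).2 hr.2
    · intro r hr
      simp only [Finset.mem_filter, Finset.mem_Icc] at hr
      split_ifs <;> omega
    · intro r hr
      simp only [Finset.mem_filter, Finset.mem_Icc] at hr
      split_ifs <;> omega
    · intro r hr
      simp only [Finset.mem_filter, Finset.mem_Icc] at hr
      rw [← hf]
      split_ifs with h1
      · rfl
      · rw [← hfq (r + h - q), Nat.sub_add_cancel (by omega)]
  rw [← Finset.mul_sum] at key
  have : (w - 1) * ∑ r ∈ (Finset.Icc 1 q).filter P, f r = 0 := by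
    rw [sub_mul, key, one_mul, sub_self]
  exact (mul_eq_zero.1 this).resolve_left (sub_ne_zero.2 hw)

theorem gcd_add_eq_one_iff_of_primeFactors {q h : ℕ} (hq : ∀ p, p.Prime → p ∣ q → p ∣ h) (r : ℕ) :
    Nat.gcd (r + h) q = 1 ↔ Nat.gcd r q = 1 := by
  rw [← Nat.coprime_iff_gcd_eq_one, ← Nat.coprime_iff_gcd_eq_one, ← not_iff_not,
    Nat.Prime.not_coprime_iff_dvd, Nat.Prime.not_coprime_iff_dvd]
  refine exists_congr fun p => and_congr_right fun hp => and_congr_left fun hpq => ?_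
  exact Nat.dvd_add_left (hq p hp hpq)

theorem sum_eq_zero_of_not_coprime {g m : ℕ} (hg : 0 < g) (hm : 0 < m) (hgm : Nat.gcd g m ≠ 1)
    (b a : ℤ) (ha : IsCoprime a ((g * m : ℕ) : ℤ)) :
    ∑ r ∈ (Finset.Icc 1 (g * m)).filter
        (fun r : ℕ => Nat.gcd r (g * m) = 1 ∧ (r : ℤ) % (g : ℤ) = b % (g : ℤ)),
      e2pi (-((((r : ℤ) * a : ℤ) : ℝ) / ((g * m : ℕ) : ℝ))) = 0 := by
  obtain ⟨p, hp, hpg, hpm⟩ := Nat.Prime.not_coprime_iff_dvd.1 hgm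
  obtain ⟨k, rfl⟩ := hpm
  have hk : 0 < k := Nat.pos_of_mul_pos_left hm
  have hgR : (g : ℝ) ≠ 0 := by positivity
  have hkR : (k : ℝ) ≠ 0 := by positivity
  have hpR : (p : ℝ) ≠ 0 := by exact_mod_cast hp.ne_zero
  have hap : IsCoprime (-a) (p : ℤ) :=
    (ha.of_isCoprime_of_dvd_right ⟨g * k, by push_cast; ring⟩).neg_left
  refine sum_filter_Icc_eq_zero_of_shift (h := g * k)
    (Nat.mul_le_mul_left g (Nat.le_mul_of_pos_left k hp.pos)) _ _
    ((isPrimitiveRoot_e2pi hp.ne_zero hap).ne_one hp.one_lt) ?_ ?_ ?_ ?_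
  · intro r
    rw [gcd_add_eq_one_iff_of_primeFactors]
    · push_cast
      rw [Int.add_mul_emod_self_left]
    · intro l hl hlq
      rcases hl.dvd_mul.1 hlq with h | h
      · exact h.mul_right k
      · rcases hl.dvd_mul.1 h with h | h
        · exact (h.trans hpg).mul_right k
        · exact h.mul_left g
  · intro r
    rw [Nat.gcd_add_self_left]
    push_cast
    rw [Int.add_mul_emod_self_left]
  · intro r
    rw [← e2pi_add]
    congr 1
    push_cast
    field_simp
    ring
  · intro r
    rw [← mul_one (e2pi _), ← e2pi_intCast a, ← e2pi_add]
    congr 1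
    push_cast
    field_simp
    ring

theorem Nat.ModEq.eq_of_mem_Icc {n r s : ℕ} (h : r ≡ s [MOD n]) (hr : r ∈ Finset.Icc 1 n)
    (hs : s ∈ Finset.Icc 1 n) : r = s := by
  rw [Finset.mem_Icc] at hr hs
  have h' : r - 1 ≡ s - 1 [MOD n] := by
    refine Nat.ModEq.add_right_cancel' 1 ?_
    rwa [Nat.sub_add_cancel hr.1, Nat.sub_add_cancel hs.1]
  have := h'.eq_of_lt_of_lt (by omega) (by omega)
  omega

theorem IsPrimitiveRoot.pow_eq_pow_iff_modEq {R : Type*} [CommRing R] {z : R} {m : ℕ}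
    (hz : IsPrimitiveRoot z m) (hm : 0 < m) {r s : ℕ} : z ^ r = z ^ s ↔ r ≡ s [MOD m] := by
  have hmod (n : ℕ) : z ^ (n % m) = z ^ n := by rw [hz.eq_orderOf, pow_mod_orderOf]
  rw [← hmod r, ← hmod s]
  exact ⟨fun h => hz.pow_inj (Nat.mod_lt r hm) (Nat.mod_lt s hm) h, fun h => congrArg _ h⟩

theorem sum_eq_moebius_of_coprime {g m : ℕ} (hg : 0 < g) (hm : 1 < m) (hgm : Nat.gcd g m = 1)
    (b : ℕ) (hb : Nat.gcd b g = 1) (a : ℤ) (ha : IsCoprime a ((g * m : ℕ) : ℤ)) (c t : ℤ)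
    (hct : 1 - (g : ℤ) * c = m * t) :
    ∑ r ∈ (Finset.Icc 1 (g * m)).filter
        (fun r : ℕ => Nat.gcd r (g * m) = 1 ∧ (r : ℤ) % (g : ℤ) = (b : ℤ) % (g : ℤ)),
      e2pi (-((((r : ℤ) * a : ℤ) : ℝ) / ((g * m : ℕ) : ℝ))) =
    ((ArithmeticFunction.moebius m : ℤ) : ℂ) *
      e2pi (-(((a * (b : ℤ) * t : ℤ) : ℝ) / (g : ℝ))) := by
  have hm0 : 0 < m := by omega
  have : NeZero m := ⟨hm0.ne'⟩
  have hgR : (g : ℝ) ≠ 0 := by positivity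
  have hmR : (m : ℝ) ≠ 0 := by positivity
  have ham : IsCoprime (-(a * c)) (m : ℤ) := by
    refine IsCoprime.neg_left (IsCoprime.mul_left
      (ha.of_isCoprime_of_dvd_right ⟨g, by push_cast; ring⟩) ⟨g, t, by linarith⟩)
  have hz := isPrimitiveRoot_e2pi hm0.ne' ham
  set z := e2pi (((-(a * c) : ℤ) : ℝ) / m) with hzdef
  have hctR : (1 : ℝ) = g * c + m * t := by
    have : (1 : ℤ) = g * c + m * t := by linarith
    exact_mod_cast this
  rw [← sum_primitiveRoots_eq_moebius hm0, Finset.sum_mul]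
  refine Finset.sum_bij (fun r _ => z ^ r) ?_ ?_ ?_ ?_
  · intro r hr
    simp only [Finset.mem_filter] at hr
    rw [mem_primitiveRoots hm0]
    exact hz.pow_of_coprime r (Nat.Coprime.coprime_mul_left_right hr.2.1)
  · intro r hr s hs hrs
    simp only [Finset.mem_filter, Finset.mem_Icc] at hr hs
    have h1 : r ≡ s [MOD m] := (hz.pow_eq_pow_iff_modEq hm0).1 hrs
    have h2 : r ≡ s [MOD g] := (Int.natCast_modEq_iff).1 (hr.2.2.trans hs.2.2.symm)
    have h3 : r ≡ s [MOD g * m] := (Nat.modEq_and_modEq_iff_modEq_mul hgm).1 ⟨h2, h1⟩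
    exact h3.eq_of_mem_Icc (Finset.mem_Icc.2 hr.1) (Finset.mem_Icc.2 hs.1)
  · intro w hw
    rw [mem_primitiveRoots hm0, hz.isPrimitiveRoot_iff] at hw
    obtain ⟨i, -, hi, rfl⟩ := hw
    obtain ⟨k, hkg, hkm⟩ := Nat.chineseRemainder hgm b i
    have hk1 : Nat.gcd (k % (g * m)) (g * m) = 1 := by
      rw [← Nat.gcd_rec, Nat.gcd_comm]
      refine Nat.Coprime.mul_right ?_ ?_
      · exact hkg.gcd_eq.trans hb
      · exact hkm.gcd_eq.trans hi
    have hlt := Nat.mod_lt k (Nat.mul_pos hg hm0)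
    have hgm1 : 1 < g * m := lt_of_lt_of_le hm (Nat.le_mul_of_pos_left m hg)
    refine ⟨k % (g * m), ?_, ?_⟩
    · simp only [Finset.mem_filter, Finset.mem_Icc]
      refine ⟨⟨Nat.pos_of_ne_zero fun h0 => ?_, hlt.le⟩, hk1, ?_⟩
      · rw [h0, Nat.gcd_zero_left] at hk1
        omega
      · exact Int.natCast_modEq_iff.2 (((Nat.mod_modEq k _).of_mul_right m).trans hkg)
    · refine (hz.pow_eq_pow_iff_modEq hm0).2 ?_
      exact ((Nat.mod_modEq k _).of_mul_left g).trans hkm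
  · intro r hr
    simp only [Finset.mem_filter] at hr
    obtain ⟨d, hd⟩ := (show (r : ℤ) ≡ b [ZMOD g] from hr.2.2).dvd
    have hdR : (b : ℝ) = r + g * d := by
      have : (b : ℤ) = r + g * d := by linarith
      exact_mod_cast this
    rw [hzdef, ← e2pi_nat_mul, ← e2pi_add, ← mul_one (e2pi (_ + _)), ← e2pi_intCast (a * d * t),
      ← e2pi_add]
    congr 1
    push_cast
    rw [hdR]
    field_simp
    linear_combination (-(r * a : ℝ)) * hctR

theorem sum_eq_of_modulus_eq {q : ℕ} (hq : 0 < q) (b : ℕ) (hb : Nat.gcd b q = 1) (a : ℤ) :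
    ∑ r ∈ (Finset.Icc 1 q).filter
        (fun r : ℕ => Nat.gcd r q = 1 ∧ (r : ℤ) % (q : ℤ) = (b : ℤ) % (q : ℤ)),
      e2pi (-((((r : ℤ) * a : ℤ) : ℝ) / (q : ℝ))) =
    e2pi (-((((b : ℤ) * a : ℤ) : ℝ) / (q : ℝ))) := by
  have hqR : (q : ℝ) ≠ 0 := by positivity
  obtain ⟨s, hs1, hsq, hsb⟩ : ∃ s, 1 ≤ s ∧ s ≤ q ∧ s ≡ b [MOD q] := by
    have hlt := Nat.mod_lt b hq
    by_cases h0 : b % q = 0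
    · exact ⟨q, hq, le_rfl, (Nat.mod_self q).trans h0.symm⟩
    · exact ⟨b % q, Nat.pos_of_ne_zero h0, hlt.le, Nat.mod_modEq b q⟩
  rw [Finset.sum_eq_single_of_mem s]
  · obtain ⟨d, hd⟩ := (Int.natCast_modEq_iff.2 hsb).dvd
    have hdR : (b : ℝ) = s + q * d := by
      have : (b : ℤ) = s + q * d := by linarith
      exact_mod_cast this
    rw [← mul_one (e2pi (-(((b * a : ℤ) : ℝ) / q))), ← e2pi_intCast (a * d), ← e2pi_add]
    congr 1
    push_cast
    rw [hdR]
    field_simp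
    ring
  · simp only [Finset.mem_filter, Finset.mem_Icc]
    exact ⟨⟨hs1, hsq⟩, hsb.gcd_eq.trans hb, Int.natCast_modEq_iff.2 hsb⟩
  · intro r hr hne
    simp only [Finset.mem_filter, Finset.mem_Icc] at hr
    refine absurd ?_ hne
    have hrs : r ≡ s [MOD q] := (Int.natCast_modEq_iff.1 hr.2.2).trans hsb.symm
    exact hrs.eq_of_mem_Icc (Finset.mem_Icc.2 hr.1) (Finset.mem_Icc.2 ⟨hs1, hsq⟩)

theorem evaluation_of_Upsilon (y b : ℕ) (hy : 0 < y) (hb0 : 0 < b) (hb : Nat.gcd b y = 1)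
    (q : ℕ) (hq : 0 < q) (a : ℤ) (ha : Int.gcd a q = 1) :
    ((1 < Nat.gcd y q ∧ Nat.gcd y q < q ∧ 1 < Nat.gcd (Nat.gcd y q) (q / Nat.gcd y q)) →
        Ups y (b : ℤ) a q = 0) ∧
    ((Nat.gcd y q < q ∧ Nat.gcd (Nat.gcd y q) (q / Nat.gcd y q) = 1) →
        ∀ gbar t : ℤ,
          Int.ModEq ((q / Nat.gcd y q : ℕ) : ℤ) ((Nat.gcd y q : ℤ) * gbar) 1 →
          1 - (Nat.gcd y q : ℤ) * gbar = ((q / Nat.gcd y q : ℕ) : ℤ) * t →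
          Ups y (b : ℤ) a q =
            ((Nat.totient y : ℂ) / (Nat.totient (Nat.lcm y q) : ℂ)) *
              ((ArithmeticFunction.moebius (q / Nat.gcd y q) : ℤ) : ℂ) *
              e2pi (-(((a * (b : ℤ) * t : ℤ) : ℝ) / (Nat.gcd y q : ℝ)))) ∧
    (Nat.gcd y q = q →
        Ups y (b : ℤ) a q = e2pi (-((((b : ℤ) * a : ℤ) : ℝ) / (q : ℝ)))) := by
  have hg : 0 < Nat.gcd y q := Nat.gcd_pos_of_pos_left q hy
  have hqm : Nat.gcd y q * (q / Nat.gcd y q) = q := Nat.mul_div_cancel' (Nat.gcd_dvd_right y q)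
  have hbg : Nat.gcd b (Nat.gcd y q) = 1 := Nat.Coprime.coprime_dvd_right (Nat.gcd_dvd_left y q) hb
  have ha' : IsCoprime a ((Nat.gcd y q * (q / Nat.gcd y q) : ℕ) : ℤ) := by
    rw [hqm]
    exact Int.isCoprime_iff_gcd_eq_one.2 ha
  refine ⟨fun ⟨_, _, h⟩ => ?_, fun ⟨hlt, h⟩ c t _ hct => ?_, fun h => ?_⟩
  · have key := sum_eq_zero_of_not_coprime hg (Nat.div_pos (Nat.gcd_le_right y hq) hg) h.ne' b a ha'
    rw [hqm] at key
    rw [Ups, key, mul_zero]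
  · have hm : 1 < q / Nat.gcd y q := by
      by_contra hle
      have := Nat.mul_le_mul_left (Nat.gcd y q) (not_lt.1 hle)
      omega
    have key := sum_eq_moebius_of_coprime hg hm h b hbg a ha' c t hct
    rw [hqm] at key
    rw [Ups, key, ← mul_assoc]
  · have hqy : q ∣ y := h ▸ Nat.gcd_dvd_left y q
    rw [h] at hbg
    have hφ : (Nat.totient y : ℂ) ≠ 0 := by exact_mod_cast (Nat.totient_pos.2 hy).ne'
    rw [Ups, Nat.lcm_eq_left hqy, div_self hφ, one_mul, h]
    exact sum_eq_of_modulus_eq hq b hbg a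

end
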